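/- arXiv:2511.01035 — 5 statements merged into one kernel-verified Lean document; each statement's English description precedes it below -/
import Mathlib

section
/- Let A > 0 and m > 0 be real numbers and let α ∈ ℝ. Then the following are equivalent: (i) for every constant g ∈ ℝ and every initial value x₀ ∈ ℝ, the sequence defined by x_{k+1} = ((1−α)A − α m)/A · x_k − g converges (to some real limit) as k → ∞; (ii) 0 < α < 2A/(A + m). (This is Proposition 1: the SC-DN-α sub-iterations, whose Fourier coefficients satisfy the affine fixed-point recurrence A·x_{k+1} + (α m − (1−α)A)·x_k + G = 0 with A = ρ_s h_s + Δt²β and m = ρ_f μ_i, converge if and only if 0 < α < 2(ρ_s h_s + Δt²β)/(ρ_s h_s + Δt²β + ρ_f μ_i).) -/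
theorem affine_conv_iff (c : ℝ) :
    (∀ g x₀ : ℝ, ∀ x : ℕ → ℝ, x 0 = x₀ →
        (∀ k : ℕ, x (k + 1) = c * x k - g) →
        ∃ L : ℝ, Filter.Tendsto x Filter.atTop (nhds L)) ↔ |c| < 1 := by
  constructor
  · intro h
    have lim : ∀ (g L : ℝ) (x : ℕ → ℝ), (∀ k : ℕ, x (k + 1) = c * x k - g) →
        Filter.Tendsto x Filter.atTop (nhds L) → L = c * L - g := by
      intro g L x hx hL
      have h1 := (Filter.tendsto_add_atTop_iff_nat 1).2 hL
      have h2 := (hL.const_mul c).sub_const g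
      simp only [hx] at h1
      exact tendsto_nhds_unique h1 h2
    have hc : c ≠ 1 := by
      intro hc
      have hrec : ∀ k : ℕ, (fun k : ℕ => -(k : ℝ)) (k + 1)
          = c * (fun k : ℕ => -(k : ℝ)) k - 1 := by
        intro k
        simp only [hc]
        push_cast
        ring
      obtain ⟨L, hL⟩ := h 1 _ (fun k : ℕ => -(k : ℝ)) rfl hrec
      have := lim _ _ (fun k : ℕ => -(k : ℝ)) hrec hL
      rw [hc] at this
      linarith
    have hrec : ∀ k : ℕ, (fun k : ℕ => c ^ k) (k + 1)
        = c * (fun k : ℕ => c ^ k) k - 0 := by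
      intro k
      simp only [pow_succ]
      ring
    obtain ⟨L, hL⟩ := h 0 _ (fun k : ℕ => c ^ k) rfl hrec
    have h1 := lim _ _ (fun k : ℕ => c ^ k) hrec hL
    have h2 : (1 - c) * L = 0 := by linarith
    have h3 : L = 0 := by
      rcases mul_eq_zero.1 h2 with h | h
      · exact absurd (by linarith) hc
      · exact h
    rw [h3] at hL
    exact tendsto_pow_atTop_nhds_zero_iff.1 hL
  · intro hc g x₀ x _ hx
    have hc1 : c - 1 ≠ 0 := by
      have := (abs_lt.1 hc).2
      linarith
    have hp : c * (g / (c - 1)) - g = g / (c - 1) := by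
      field_simp
      ring
    have key : ∀ k, x k = c ^ k * (x 0 - g / (c - 1)) + g / (c - 1) := by
      intro k
      induction k with
      | zero => simp
      | succ k ih =>
        rw [hx, ih, pow_succ]
        linear_combination hp
    refine ⟨0 * (x 0 - g / (c - 1)) + g / (c - 1), ?_⟩
    refine Filter.Tendsto.congr (fun k => (key k).symm) ?_
    exact ((tendsto_pow_atTop_nhds_zero_iff.2 hc).mul_const _).add_const _

/-- Proposition 1 (convergence of the SC-DN-α sub-iterations): with
`A = ρ_s h_s + Δt²β > 0` and `m = ρ_f μ_i > 0`, the affine fixed-point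
recurrence `x_{k+1} = ((1−α)A − αm)/A · x_k − g` converges for every
constant `g` and every initial datum `x₀` if and only if
`0 < α < 2A/(A + m)`. -/
theorem scdn_alpha_convergence_iff (A m α : ℝ) (hA : 0 < A) (hm : 0 < m) :
    (∀ g x₀ : ℝ, ∀ x : ℕ → ℝ, x 0 = x₀ →
        (∀ k : ℕ, x (k + 1) = ((1 - α) * A - α * m) / A * x k - g) →
        ∃ L : ℝ, Filter.Tendsto x Filter.atTop (nhds L)) ↔
      (0 < α ∧ α < 2 * A / (A + m)) := by
  rw [affine_conv_iff, abs_lt, lt_div_iff₀ hA, div_lt_iff₀ hA, lt_div_iff₀ (by positivity)]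
  constructor
  · rintro ⟨h1, h2⟩
    refine ⟨?_, by linarith⟩
    have : 0 < α * (A + m) := by linarith
    exact pos_of_mul_pos_left this (by positivity)
  · rintro ⟨h1, h2⟩
    have : 0 < α * (A + m) := by positivity
    constructor <;> linarith
end

section
/- Let s > 0, m > 0, β > 0, Δt > 0 and 0 < α ≤ 1. If m > β(2−α)Δt²/(4α) + (2(1−α)/α + 1)·s, then the characteristic polynomial χ of the LC-DN-α scheme has a real root y with y < −1; in particular χ has a real root of modulus strictly greater than 1. (Proposition 2: the LC-DN-α scheme is unconditionally unstable when ρ_f μ_i exceeds this threshold.) -/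
/-- Characteristic polynomial of the LC-DN-α scheme for the benchmark FSI
problem, with `s = ρ_s h_s`, `m = ρ_f μ_i`, `β` the elastic coefficient,
`Δt` the time step and `α` the Richardson acceleration parameter. -/
noncomputable def lcdnChi (s m β Δt α y : ℝ) : ℝ :=
  (s / Δt ^ 2 + β) * y ^ 3
    + (α * m / Δt ^ 2 - β * (1 - α) - 3 * s / Δt ^ 2 + α * s / Δt ^ 2) * y ^ 2
    + (3 * s / Δt ^ 2 - 2 * α * m / Δt ^ 2 - 2 * α * s / Δt ^ 2) * y
    + (-(1 - α) * s / Δt ^ 2 + α * m / Δt ^ 2)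

theorem cubic_root_lt_neg_one (a b c d : ℝ) (ha : 0 < a) (h : 0 < -a + b - c + d) :
    ∃ y : ℝ, a * y ^ 3 + b * y ^ 2 + c * y + d = 0 ∧ y < -1 := by
  obtain ⟨K, hK⟩ : ∃ K, K = |b| + |c| + |d| := ⟨_, rfl⟩
  have hK0 : 0 ≤ K := by rw [hK]; positivity
  obtain ⟨T, hT⟩ : ∃ T, T = 1 + K / a := ⟨_, rfl⟩
  have hT1 : 1 ≤ T := by
    have : 0 ≤ K / a := by positivity
    linarith
  have haT : a * T = a + K := by rw [hT]; field_simp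
  have hneg : a * (-T) ^ 3 + b * (-T) ^ 2 + c * (-T) + d < 0 := by
    have h2 : T ≤ T ^ 2 := by nlinarith
    have h3 : 1 ≤ T ^ 2 := by linarith
    have hb : b * T ^ 2 ≤ |b| * T ^ 2 := by gcongr; exact le_abs_self b
    have hc : -c * T ≤ |c| * T ^ 2 := by
      calc -c * T ≤ |c| * T := by gcongr; exact neg_le_abs c
        _ ≤ |c| * T ^ 2 := by gcongr
    have hd : d ≤ |d| * T ^ 2 := by nlinarith [le_abs_self d, abs_nonneg d]
    have e : a * (-T) ^ 3 = -((a + K) * T ^ 2) := by rw [← haT]; ring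
    rw [e, hK]
    have : 0 < a * T ^ 2 := by positivity
    nlinarith
  have hcont : ContinuousOn (fun y : ℝ => a * y ^ 3 + b * y ^ 2 + c * y + d)
      (Set.Icc (-T) (-1)) := by fun_prop
  have hle : -T ≤ -1 := by linarith
  obtain ⟨y, hy, hy0⟩ := intermediate_value_Ico hle hcont
    (show (0 : ℝ) ∈ Set.Ico _ _ from ⟨hneg.le, by ring_nf; linarith⟩)
  exact ⟨y, hy0, hy.2⟩

/-- Proposition 2 (instability of the LC-DN-α scheme): if `0 < α ≤ 1` and
`m = ρ_f μ_i` exceeds the threshold `β(2−α)Δt²/(4α) + (2(1−α)/α + 1)s`,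
then the characteristic polynomial has a real root `y < −1`; in particular
it has a real root of modulus strictly greater than 1. -/
theorem lcdn_alpha_unstable_root (s m β Δt α : ℝ)
    (hs : 0 < s) (hm : 0 < m) (hβ : 0 < β) (hΔt : 0 < Δt)
    (hα₀ : 0 < α) (hα₁ : α ≤ 1)
    (hmass : m > β * (2 - α) * Δt ^ 2 / (4 * α) + (2 * (1 - α) / α + 1) * s) :
    ∃ y : ℝ, lcdnChi s m β Δt α y = 0 ∧ y < -1 ∧ 1 < |y| := by
  have hD : 0 < Δt ^ 2 := by positivity
  have key : 0 < 4 * α * m - 8 * s + 4 * α * s - β * (2 - α) * Δt ^ 2 := by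
    have h1 := mul_lt_mul_of_pos_left hmass (show 0 < 4 * α by positivity)
    have h2 : 4 * α * (β * (2 - α) * Δt ^ 2 / (4 * α) + (2 * (1 - α) / α + 1) * s)
        = β * (2 - α) * Δt ^ 2 + (8 * (1 - α) + 4 * α) * s := by
      field_simp
      ring
    rw [h2] at h1
    linarith
  obtain ⟨y, hy, hy1⟩ := cubic_root_lt_neg_one (s / Δt ^ 2 + β)
    (α * m / Δt ^ 2 - β * (1 - α) - 3 * s / Δt ^ 2 + α * s / Δt ^ 2)
    (3 * s / Δt ^ 2 - 2 * α * m / Δt ^ 2 - 2 * α * s / Δt ^ 2)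
    (-(1 - α) * s / Δt ^ 2 + α * m / Δt ^ 2) (by positivity) (by
      have := div_pos key hD
      refine lt_of_lt_of_eq this ?_
      field_simp
      ring)
  exact ⟨y, hy, hy1, by rw [abs_of_neg (by linarith)]; linarith⟩
end

section
/- Let s > 0, m > 0, β > 0, Δt > 0 and suppose 0 < α < 2s/(s + m) (equivalently 0 < α < 2(s/m)/((s/m) + 1)). Then χ(−1) < 0, where χ is the characteristic polynomial of the LC-DN-α scheme (second Jury condition in the proof of Proposition 3, valid for every Δt > 0). -/
/-- Second Jury condition in the proof of Proposition 3: if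
`0 < α < 2s/(s + m)` then `χ(−1) < 0`, for every `Δt > 0`. -/
theorem lcdn_chi_neg_one_neg (s m β Δt α : ℝ)
    (hs : 0 < s) (hm : 0 < m) (hβ : 0 < β) (hΔt : 0 < Δt)
    (hα₀ : 0 < α) (hα₁ : α < 2 * s / (s + m)) :
    lcdnChi s m β Δt α (-1) < 0 := by
  have hα2 : α * (s + m) < 2 * s := by
    rwa [lt_div_iff₀ (by positivity)] at hα₁
  have h2 : α < 2 := by
    by_contra h
    have h' : 2 ≤ α := not_lt.mp h
    nlinarith
  have hd : 0 < 1 / Δt ^ 2 := by positivity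
  have key : lcdnChi s m β Δt α (-1)
      = -(4 * (2 * s - α * (s + m)) * (1 / Δt ^ 2) + β * (2 - α)) := by
    unfold lcdnChi
    ring
  rw [key]
  have h3 : 0 < 4 * (2 * s - α * (s + m)) * (1 / Δt ^ 2) :=
    mul_pos (by linarith) hd
  have h4 : 0 < β * (2 - α) := mul_pos hβ (by linarith)
  linarith
end

section
/- Let s > 0, m > 0, β > 0, Δt > 0, assume s/m < 1 and 0 < α < ᾱ := 2(s/m)/((s/m) + 1) = 2s/(s + m). Set a₃ = 1 + βΔt²/s, a₂ = −3 + α − (1−α)βΔt²/s + α m/s, a₁ = 3 − 2α − 2α m/s, a₀ = α m/s − 1 + α (the coefficients of the normalized characteristic polynomial Q(y) = (Δt²/s)·χ(y) of the LC-DN-α scheme). Then |a₀² − a₃²| > |a₀·a₂ − a₁·a₃| (fourth Jury condition in the proof of Proposition 3). -/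
/-- Fourth Jury condition in the proof of Proposition 3: with
`a₃ = 1 + βΔt²/s`, `a₂ = −3 + α − (1−α)βΔt²/s + αm/s`,
`a₁ = 3 − 2α − 2αm/s`, `a₀ = αm/s − 1 + α` the coefficients of the
normalized characteristic polynomial of the LC-DN-α scheme, if `s/m < 1`
and `0 < α < 2(s/m)/((s/m) + 1)` then `|a₀² − a₃²| > |a₀a₂ − a₁a₃|`. -/
theorem lcdn_jury_four (s m β Δt α : ℝ)
    (hs : 0 < s) (hm : 0 < m) (hβ : 0 < β) (hΔt : 0 < Δt)
    (hratio : s / m < 1)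
    (hα₀ : 0 < α) (hα₁ : α < 2 * (s / m) / (s / m + 1)) :
    |(α * m / s - 1 + α) ^ 2 - (1 + β * Δt ^ 2 / s) ^ 2| >
      |(α * m / s - 1 + α) * (-3 + α - (1 - α) * (β * Δt ^ 2 / s) + α * m / s)
        - (3 - 2 * α - 2 * α * m / s) * (1 + β * Δt ^ 2 / s)| := by
  have hsm : s < m := by rwa [div_lt_one hm] at hratio
  have e : 2 * (s / m) / (s / m + 1) = 2 * s / (s + m) := by
    field_simp
  rw [e, lt_div_iff₀ (by positivity)] at hα₁
  have hb : 0 < β * Δt ^ 2 / s := by positivity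
  have hq : 0 < α * m / s := by positivity
  have hq2 : α * m / s + α < 2 := by
    have : α * m / s + α = α * (s + m) / s := by field_simp; ring
    rw [this, div_lt_iff₀ hs]
    exact hα₁
  have hα1 : α < 1 := by
    nlinarith
  have e2 : 2 * α * m / s = 2 * (α * m / s) := by ring
  rw [e2]
  generalize α * m / s = q at *
  generalize β * Δt ^ 2 / s = b at *
  obtain ⟨k, hk⟩ : ∃ k, k = q + α := ⟨_, rfl⟩
  obtain rfl : q = k - α := by linarith
  have hk2 : k < 2 := by linarith
  have hk0 : 0 < k := by linarith
  have h1 : 0 < k * (2 - k) := mul_pos hk0 (by linarith)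
  have h2 : 0 < b * (4 - k - α * (k - 1)) := by
    apply mul_pos hb
    nlinarith
  have h3 : 0 < b * (k - α + α * k) := by
    apply mul_pos hb
    nlinarith
  have h4 : 0 < b ^ 2 := by positivity
  rw [gt_iff_lt, abs_sub_comm ((k - α - 1 + α) ^ 2)]
  refine lt_of_lt_of_le ?_ (le_abs_self _)
  rw [abs_lt]
  constructor <;> nlinarith
end

section
/- Let s > 0, m > 0, β > 0, Δt > 0, assume s/m < 1 and 0 < α < ᾱ := 2s/(s + m). Then every sequence η : ℕ → ℝ satisfying, for all n, the recurrence (s + βΔt²)·η_{n+3} + (α m − (1−α)βΔt² − (3−α)s)·η_{n+2} + ((3−2α)s − 2α m)·η_{n+1} + (α m − (1−α)s)·η_n = 0 converges to 0 as n → ∞; in particular every such sequence is bounded. (Absolute stability of the LC-DN-α scheme asserted in Proposition 3, expressed on the interface-displacement Fourier coefficients.) -/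
/-- A stable first order linear recurrence with vanishing forcing tends to zero. -/
theorem first_order_tendsto (y e : ℕ → ℂ) (z : ℂ) (hz : ‖z‖ < 1)
    (hy : ∀ n, y (n + 1) = z * y n + e n)
    (he : Filter.Tendsto e Filter.atTop (nhds 0)) :
    Filter.Tendsto y Filter.atTop (nhds 0) := by
  rw [Metric.tendsto_atTop] at he ⊢
  intro ε hε
  have hc : 0 < 1 - ‖z‖ := by linarith
  obtain ⟨N, hN⟩ := he (ε / 2 * (1 - ‖z‖)) (by positivity)
  have key : ∀ k, ‖y (N + k)‖ ≤ ‖z‖ ^ k * ‖y N‖ + ε / 2 := by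
    intro k
    induction k with
    | zero => simp; linarith
    | succ k ih =>
      have h1 := hN (N + k) (by omega)
      rw [dist_zero_right] at h1
      have h2 : ‖y (N + (k + 1))‖ ≤ ‖z‖ * ‖y (N + k)‖ + ‖e (N + k)‖ := by
        rw [← add_assoc, hy, ← norm_mul]
        exact norm_add_le _ _
      have h3 := mul_le_mul_of_nonneg_left ih (norm_nonneg z)
      rw [pow_succ]
      nlinarith
  have hlim : Filter.Tendsto (fun k => ‖z‖ ^ k * ‖y N‖) Filter.atTop (nhds 0) := by
    have := (tendsto_pow_atTop_nhds_zero_of_lt_one (norm_nonneg z) hz).mul_const ‖y N‖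
    simpa using this
  obtain ⟨K, hK⟩ := (Metric.tendsto_atTop.1 hlim) (ε / 2) (by positivity)
  refine ⟨N + K, fun n hn => ?_⟩
  obtain ⟨k, rfl⟩ : ∃ k, n = N + k := ⟨n - N, by omega⟩
  have h1 := hK k (by omega)
  rw [Real.dist_eq, sub_zero] at h1
  have h2 := le_abs_self (‖z‖ ^ k * ‖y N‖)
  rw [dist_zero_right]
  linarith [key k]

/-- Jury criterion for a real quadratic. -/
theorem quad_root_lt (p q : ℝ) (h1 : 0 < 1 + p + q) (h2 : 0 < 1 - p + q) (hq : q < 1)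
    (z : ℂ) (hz : z ^ 2 + p * z + q = 0) : ‖z‖ < 1 := by
  have hre := congrArg Complex.re hz
  have him := congrArg Complex.im hz
  simp [pow_two] at hre him
  have hn : ‖z‖ ^ 2 = z.re * z.re + z.im * z.im := by
    rw [← Complex.normSq_eq_norm_sq, Complex.normSq_apply]
  have : ‖z‖ ^ 2 < 1 := by
    rw [hn]
    have hf : z.im * (2 * z.re + p) = 0 := by linarith
    rcases mul_eq_zero.1 hf with h | h
    · rw [h] at hre ⊢
      have ha : z.re < 1 := by
        by_contra hcon
        push Not at hcon
        nlinarith [mul_nonneg (sub_nonneg.2 hcon) (by linarith : 0 ≤ z.re + 1 + p)]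
      have hb : -1 < z.re := by
        by_contra hcon
        push Not at hcon
        nlinarith [mul_nonneg (by linarith : 0 ≤ -1 - z.re) (by linarith : 0 ≤ 1 - z.re - p)]
      nlinarith
    · have : p = -2 * z.re := by linarith
      subst this
      nlinarith
  nlinarith [norm_nonneg z]

/-- Second order stable real recurrences with vanishing forcing. -/
theorem second_order_tendsto (y e : ℕ → ℂ) (p q : ℝ) (h1 : 0 < 1 + p + q)
    (h2 : 0 < 1 - p + q) (hq : q < 1)
    (hy : ∀ n, y (n + 2) + p * y (n + 1) + q * y n = e n)
    (he : Filter.Tendsto e Filter.atTop (nhds 0)) :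
    Filter.Tendsto y Filter.atTop (nhds 0) := by
  obtain ⟨d, hd⟩ := IsAlgClosed.exists_pow_nat_eq ((p : ℂ) ^ 2 - 4 * q) (n := 2) (by norm_num)
  have hz := quad_root_lt p q h1 h2 hq ((-p + d) / 2) (by linear_combination hd / 4)
  have hw := quad_root_lt p q h1 h2 hq ((-p - d) / 2) (by linear_combination hd / 4)
  have hu : Filter.Tendsto (fun n => y (n + 1) - (-p + d) / 2 * y n) Filter.atTop (nhds 0) := by
    refine first_order_tendsto _ e _ hw (fun n => ?_) he
    have := hy n
    simp only [add_assoc, Nat.reduceAdd]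
    linear_combination this - hd / 4 * y n
  exact first_order_tendsto y _ _ hz (fun n => by ring) hu

/-- Jury criterion for a real cubic recurrence. -/
theorem third_order_tendsto (η : ℕ → ℝ) (a b c : ℝ)
    (h1 : 0 < 1 + a + b + c) (h2 : -1 + a - b + c < 0) (hc : |c| < 1)
    (h3 : 0 < 1 - c ^ 2 - b + c * a)
    (hη : ∀ n, η (n + 3) + a * η (n + 2) + b * η (n + 1) + c * η n = 0) :
    Filter.Tendsto η Filter.atTop (nhds 0) := by
  have hcont : ContinuousOn (fun x : ℝ => x ^ 3 + a * x ^ 2 + b * x + c) (Set.Icc (-1) 1) := by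
    fun_prop
  obtain ⟨r, ⟨hr1, hr2⟩, hr⟩ := intermediate_value_Ioo (by norm_num : (-1 : ℝ) ≤ 1) hcont
    (show (0 : ℝ) ∈ Set.Ioo _ _ from ⟨by norm_num; linarith, by norm_num; linarith⟩)
  simp only at hr
  obtain ⟨p, hp⟩ : ∃ p, p = a + r := ⟨_, rfl⟩
  obtain ⟨q, hq⟩ : ∃ q, q = b + r * p := ⟨_, rfl⟩
  have ha : a = p - r := by linarith
  have hb : b = q - r * p := by linarith
  have hc' : c = -(r * q) := by rw [ha, hb] at hr; linear_combination hr
  subst ha hb hc'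
  have k1 : 0 < 1 + p + q := by
    have : 0 < (1 - r) * (1 + p + q) := by linarith
    exact pos_of_mul_pos_right this (by linarith)
  have k2 : 0 < 1 - p + q := by
    have : 0 < (1 + r) * (1 - p + q) := by linarith
    exact pos_of_mul_pos_right this (by linarith)
  obtain ⟨c1, c2⟩ := abs_lt.1 hc
  have k3 : 0 < 1 + r * p + r ^ 2 * q := by
    rcases le_total 0 r with h | h
    · nlinarith [mul_nonneg h k2.le, mul_nonneg h k1.le,
        mul_pos (by linarith : 0 < 1 - r) (by linarith : 0 < 1 - r * q)]
    · nlinarith [mul_nonneg (neg_nonneg.2 h) k2.le, mul_nonneg (neg_nonneg.2 h) k1.le,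
        mul_pos (by linarith : 0 < 1 + r) (by linarith : 0 < 1 + r * q)]
  have k4 : q < 1 := by
    have : 0 < (1 + r * p + r ^ 2 * q) * (1 - q) := by linarith
    linarith [pos_of_mul_pos_right this k3.le]
  have hr' : ‖(r : ℂ)‖ < 1 := by
    rw [Complex.norm_real, Real.norm_eq_abs, abs_lt]; exact ⟨hr1, hr2⟩
  have hu : Filter.Tendsto (fun n => (η (n + 1) : ℂ) - r * η n) Filter.atTop (nhds 0) := by
    refine second_order_tendsto _ (fun _ => 0) p q k1 k2 k4 (fun n => ?_) tendsto_const_nhds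
    have := congrArg (fun x : ℝ => (x : ℂ)) (hη n)
    push_cast at this
    simp only [add_assoc, Nat.reduceAdd]
    linear_combination this
  have hv := first_order_tendsto (fun n => (η n : ℂ)) _ _ hr' (fun n => by ring) hu
  have hw := (Complex.continuous_re.tendsto 0).comp hv
  simpa [Function.comp_def] using hw

/-- Absolute stability of the LC-DN-α scheme (Proposition 3), expressed on
the interface-displacement Fourier coefficients: if `s/m < 1` and
`0 < α < 2s/(s + m)`, then every solution of the finite-difference equation
of the LC-DN-α scheme converges to 0; in particular it is bounded. -/
theorem lcdn_alpha_stable_sequences (s m β Δt α : ℝ)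
    (hs : 0 < s) (hm : 0 < m) (hβ : 0 < β) (hΔt : 0 < Δt)
    (hratio : s / m < 1)
    (hα₀ : 0 < α) (hα₁ : α < 2 * s / (s + m)) :
    ∀ η : ℕ → ℝ,
      (∀ n : ℕ,
        (s + β * Δt ^ 2) * η (n + 3)
          + (α * m - (1 - α) * β * Δt ^ 2 - (3 - α) * s) * η (n + 2)
          + ((3 - 2 * α) * s - 2 * α * m) * η (n + 1)
          + (α * m - (1 - α) * s) * η n = 0) →
      Filter.Tendsto η Filter.atTop (nhds 0) ∧ ∃ C : ℝ, ∀ n : ℕ, |η n| ≤ C := by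
  intro η hη
  have hsm : s < m := by rwa [div_lt_one hm] at hratio
  have hk : α * (s + m) < 2 * s := by rwa [lt_div_iff₀ (by linarith)] at hα₁
  have hα : α < 1 := by
    by_contra hcon
    push Not at hcon
    nlinarith [mul_le_mul_of_nonneg_right hcon (by linarith : 0 ≤ s + m)]
  obtain ⟨b, hb⟩ : ∃ b, b = β * Δt ^ 2 := ⟨_, rfl⟩
  have hb0 : 0 < b := by rw [hb]; positivity
  have hA : 0 < s + b := by linarith
  have hA' : s + b ≠ 0 := hA.ne'
  have hαb : 0 < α * b := mul_pos hα₀ hb0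
  have hαb' : α * b < b := by nlinarith
  have hαm : 0 < α * m := mul_pos hα₀ hm
  have hαs : 0 < α * s := mul_pos hα₀ hs
  have hlim : Filter.Tendsto η Filter.atTop (nhds 0) := by
    refine third_order_tendsto η ((α * m - (1 - α) * b - (3 - α) * s) / (s + b))
      (((3 - 2 * α) * s - 2 * α * m) / (s + b)) ((α * m - (1 - α) * s) / (s + b))
      ?_ ?_ ?_ ?_ ?_
    · have : 1 + (α * m - (1 - α) * b - (3 - α) * s) / (s + b)
          + ((3 - 2 * α) * s - 2 * α * m) / (s + b) + (α * m - (1 - α) * s) / (s + b)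
          = α * b / (s + b) := by field_simp; ring
      rw [this]; positivity
    · have : -1 + (α * m - (1 - α) * b - (3 - α) * s) / (s + b)
          - ((3 - 2 * α) * s - 2 * α * m) / (s + b) + (α * m - (1 - α) * s) / (s + b)
          = (-8 * s - 2 * b + α * b + 4 * (α * (s + m))) / (s + b) := by field_simp; ring
      rw [this]
      exact div_neg_of_neg_of_pos (by linarith) hA
    · rw [abs_lt, lt_div_iff₀ hA, div_lt_one hA]
      constructor <;> linarith
    · have : 1 - ((α * m - (1 - α) * s) / (s + b)) ^ 2 - ((3 - 2 * α) * s - 2 * α * m) / (s + b)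
          + (α * m - (1 - α) * s) / (s + b) * ((α * m - (1 - α) * b - (3 - α) * s) / (s + b))
          = b * (b + α * m + α * (α * (s + m))) / (s + b) ^ 2 := by field_simp; ring
      rw [this]; positivity
    · intro n
      have h := hη n
      rw [mul_assoc (1 - α) β, ← hb] at h
      field_simp
      linear_combination h
  refine ⟨hlim, ?_⟩
  obtain ⟨C, hC⟩ := (Metric.isBounded_range_of_tendsto η hlim).exists_norm_le
  exact ⟨C, fun n => hC _ ⟨n, rfl⟩⟩
end
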